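/- Let H be a primitive, aperiodic and marked substitution over a finite alphabet A, with attractor K, and let φ : A^ℕ → ℝ be the potential defined by φ(x) = log(1 + 1/δ(x)) if x ∉ K and φ(x) = 0 if x ∈ K. Let w_J be a finite word over A not belonging to L_H and let J = [w_J] be the cylinder of sequences beginning with w_J. Then there exists β_0 > 0 such that for every β > β_0 and every x ∈ J, Σ_{n ≥ 1} Σ_{y ∈ J : τ(y) = n and σ^n(y) = x} exp(−β Σ_{k=0}^{n−1} φ(σ^k(y))) < 1, where τ(y) = min{n ≥ 1 : σ^n(y) ∈ J} is the first return time to J (in particular this series converges). -/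

import Mathlib

open Filter Topology MeasureTheory

variable {A : Type*}

/-- The shift map on infinite words. -/
def shift (x : ℕ → A) : ℕ → A := fun n => x (n + 1)

/-- Image of a finite word under a substitution. -/
def wordMap (H : A → List A) (w : List A) : List A := w.flatMap H

/-- Image of an infinite word under a substitution (each `H a` nonempty makes this the
infinite concatenation `H(x₀)H(x₁)⋯`). -/
def substSeq (H : A → List A) (x : ℕ → A) : ℕ → A :=
  fun n => (wordMap H ((List.range (n + 1)).map x)).getD n (x 0)

/-- The prefix of length `n` of an infinite word. -/
def prefixWord (x : ℕ → A) (n : ℕ) : List A := (List.range n).map x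

/-- The factor of length `n` at position `i` of an infinite word. -/
def factorAt (x : ℕ → A) (i n : ℕ) : List A := (List.range n).map fun j => x (i + j)

/-- The language of an infinite word: the set of its finite factors. -/
def Lang (u : ℕ → A) : Set (List A) := {w | ∃ i, w = factorAt u i w.length}

/-- A sequence is (purely) periodic for the shift. -/
def PeriodicSeq (x : ℕ → A) : Prop := ∃ m, 0 < m ∧ ∀ n, x (n + m) = x n

/-- `u` is a fixed point of the substitution `H`. -/
def IsFixedPointSubst (H : A → List A) (u : ℕ → A) : Prop := substSeq H u = u

/-- `H` is primitive: some power of `H` maps every letter onto a word containing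
every letter. -/
def PrimitiveSubst (H : A → List A) : Prop :=
  ∃ k, 0 < k ∧ ∀ a b : A, b ∈ (wordMap H)^[k] [a]

/-- `H` is aperiodic: no fixed point of `H` is periodic for the shift. -/
def AperiodicSubst (H : A → List A) : Prop :=
  ∀ u : ℕ → A, IsFixedPointSubst H u → ¬ PeriodicSeq u

/-- `H` is marked: first letters of images are pairwise distinct, and so are last letters. -/
def MarkedSubst (H : A → List A) (hne : ∀ a, H a ≠ []) : Prop :=
  Function.Injective (fun a => (H a).head (hne a)) ∧
  Function.Injective (fun a => (H a).getLast (hne a))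

/-- `H` is 2-full (with respect to the fixed point `u`): every word of length 2 belongs
to the language. -/
def TwoFull (H : A → List A) (u : ℕ → A) : Prop :=
  ∀ w : List A, w.length = 2 → w ∈ Lang u

/-- The attractor `K`: closure of the shift-orbit of the fixed point `u`. -/
def orbitClosure [TopologicalSpace A] (u : ℕ → A) : Set (ℕ → A) :=
  closure {y | ∃ n, y = shift^[n] u}

/-- `δ(x)`: the length of the maximal prefix of `x` belonging to the language of `u`. -/
noncomputable def delta (u x : ℕ → A) : ℕ := sSup {n | prefixWord x n ∈ Lang u}

/-- The renormalization operator `R`. -/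
noncomputable def renorm (H : A → List A) (V : (ℕ → A) → ℝ) : (ℕ → A) → ℝ :=
  fun x => ∑ i ∈ Finset.range (H (x 0)).length, V (shift^[i] (substSeq H x))

/-- `t_n(x) = |H^n(x₀)|`. -/
def tlen (H : A → List A) (n : ℕ) (x : ℕ → A) : ℕ := ((wordMap H)^[n] [x 0]).length

/-- An accident occurs at time `b`. -/
def AccidentAt (u x : ℕ → A) (b : ℕ) : Prop :=
  0 < b ∧ delta u x - b < delta u (shift^[b] x) ∧
    ∀ i < b, delta u (shift^[i] x) = delta u x - i

/-- The first accident time of `x` (junk value `0` if there is none). -/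
noncomputable def firstAccident (u x : ℕ → A) : ℕ := sInf {b | AccidentAt u x b}

/-- The `j`-th accident time `B_j` of `x`, defined inductively. -/
noncomputable def accidentTime (u x : ℕ → A) : ℕ → ℕ
  | 0 => 0
  | j + 1 => accidentTime u x j + firstAccident u (shift^[accidentTime u x j] x)

/-- The set of (genuine) accident times of `x`. -/
def AccidentSet (u x : ℕ → A) : Set ℕ :=
  {B | ∃ j : ℕ, B = accidentTime u x (j + 1) ∧
        AccidentAt u (shift^[accidentTime u x j] x)
          (firstAccident u (shift^[accidentTime u x j] x))}

/-- A word is right special. -/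
def RightSpecial (u : ℕ → A) (w : List A) : Prop :=
  ∃ b c : A, b ≠ c ∧ w ++ [b] ∈ Lang u ∧ w ++ [c] ∈ Lang u

/-- A word is left special. -/
def LeftSpecial (u : ℕ → A) (w : List A) : Prop :=
  ∃ a b : A, a ≠ b ∧ a :: w ∈ Lang u ∧ b :: w ∈ Lang u

/-- A word is bispecial. -/
def Bispecial (u : ℕ → A) (w : List A) : Prop := RightSpecial u w ∧ LeftSpecial u w

/-- `l` is a recognizability constant for `H`: every long enough word of the language
admits a unique desubstitution. -/
def RecogBound (H : A → List A) (u : ℕ → A) (l : ℕ) : Prop :=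
  ∀ z ∈ Lang u, l < z.length →
    ∃! d : List A × List A × List A,
      ∃ s p : A,
        z = d.1 ++ wordMap H d.2.1 ++ d.2.2 ∧
        d.2.1 ∈ Lang u ∧
        d.1 <:+ H s ∧ d.1.length < (H s).length ∧
        d.2.2 <+: H p ∧ d.2.2.length < (H p).length ∧
        ([s] ++ d.2.1 ++ [p]) ∈ Lang u

/-- The incidence matrix of a substitution, with real entries. -/
def incMat [Fintype A] [DecidableEq A] (H : A → List A) : Matrix A A ℝ :=
  fun a b => ((H a).count b : ℝ)

/-- `lam` is the Perron–Frobenius eigenvalue of the incidence matrix of the (primitive)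
substitution `H`: it admits an entrywise positive eigenvector. -/
def IsPerronValue [Fintype A] [DecidableEq A] (H : A → List A) (lam : ℝ) : Prop :=
  ∃ v : A → ℝ, (∀ a, 0 < v a) ∧ (incMat H).mulVec v = lam • v

/-- Concatenation of a finite word with an infinite word. -/
def catWord (S : List A) (y : ℕ → A) : ℕ → A :=
  fun n => S.getD n (y (n - S.length))

/-- First return time to a set `J` (junk value `0` if the orbit never returns). -/
noncomputable def returnTime (J : Set (ℕ → A)) (y : ℕ → A) : ℕ :=
  sInf {n : ℕ | 1 ≤ n ∧ shift^[n] y ∈ J}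

/-!
A word `y` with `shift^[n] y = x` is rebuilt from `x` by left extensions of dyadic lengths, each
chosen at time `k` as the largest `2 ^ e` for which the factor of `y` of length `2 * 2 ^ e - 1`
starting at `k - 2 ^ e` is in the language. Linear recurrence and aperiodicity leave at most
`4 * R ^ 2` extensions of each length. The exponent grows by at most one per step and is at most
`N` at the start, where `x` leaves the language within `N` letters, so at most
`(16 * R ^ 2) ^ l * 2 ^ N` pairs `(n, y)` are reached in `l` steps. Maximality of the exponents,
on the other hand, forces long factors of `y` out of the language, where `φ` is large: the number
of steps is at most `13 * S + 3 * N + 3`, with `S` the Birkhoff sum of `φ`. Since `S` is also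
bounded below, the series is dominated by a convergent geometric series whose sum is small for
large `β`.
-/

section Factors

variable {u x y : ℕ → A} {i j k m n : ℕ}

lemma length_factorAt (x : ℕ → A) (i n : ℕ) : (factorAt x i n).length = n := by
  simp [factorAt]

lemma factorAt_one (x : ℕ → A) (i : ℕ) : factorAt x i 1 = [x i] := by
  simp [factorAt]

lemma factorAt_two (x : ℕ → A) (i : ℕ) : factorAt x i 2 = [x i, x (i + 1)] := by
  simp [factorAt, List.range_succ]

lemma factorAt_add (x : ℕ → A) (i m n : ℕ) :
    factorAt x i (m + n) = factorAt x i m ++ factorAt x (i + m) n := by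
  simp [factorAt, List.range_add, Function.comp_def, add_assoc]

lemma factorAt_eq_factorAt_iff :
    factorAt x i n = factorAt y j n ↔ ∀ r < n, x (i + r) = y (j + r) := by
  simp [factorAt]

lemma prefixWord_eq_factorAt (x : ℕ → A) (n : ℕ) : prefixWord x n = factorAt x 0 n := by
  simp [prefixWord, factorAt]

lemma length_prefixWord (x : ℕ → A) (n : ℕ) : (prefixWord x n).length = n := by
  simp [prefixWord]

lemma prefixWord_add (x : ℕ → A) (m n : ℕ) :
    prefixWord x (m + n) = prefixWord x m ++ factorAt x m n := by
  simp only [prefixWord_eq_factorAt, factorAt_add, zero_add]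

lemma prefixWord_isPrefix (x : ℕ → A) (h : m ≤ n) : prefixWord x m <+: prefixWord x n := by
  obtain ⟨c, rfl⟩ := Nat.exists_eq_add_of_le h
  exact ⟨_, (prefixWord_add x m c).symm⟩

lemma shift_iterate_apply (k : ℕ) (x : ℕ → A) (n : ℕ) : shift^[k] x n = x (k + n) := by
  induction k generalizing x with
  | zero => simp
  | succ k ih => rw [Function.iterate_succ_apply, ih, shift]; congr 1; omega

lemma factorAt_shift_iterate (k : ℕ) (x : ℕ → A) (i n : ℕ) :
    factorAt (shift^[k] x) i n = factorAt x (k + i) n := by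
  simp only [factorAt, shift_iterate_apply, add_assoc]

lemma prefixWord_shift_iterate (k : ℕ) (x : ℕ → A) (n : ℕ) :
    prefixWord (shift^[k] x) n = factorAt x k n := by
  rw [prefixWord_eq_factorAt, factorAt_shift_iterate, add_zero]

lemma eq_of_shift_iterate_eq (hshift : shift^[n] x = shift^[n] y)
    (hpre : ∀ r < n, x r = y r) : x = y := by
  funext r
  rcases lt_or_ge r n with hr | hr
  · exact hpre r hr
  · obtain ⟨c, rfl⟩ := Nat.exists_eq_add_of_le hr
    simpa only [shift_iterate_apply] using congrFun hshift c

lemma factorAt_isInfix (x : ℕ → A) (hi : i ≤ j) (hj : j + m ≤ i + n) :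
    factorAt x j m <:+: factorAt x i n := by
  obtain ⟨a, rfl⟩ := Nat.exists_eq_add_of_le hi
  obtain ⟨c, rfl⟩ : ∃ c, n = a + m + c := Nat.exists_eq_add_of_le (by omega)
  exact ⟨factorAt x i a, factorAt x (i + (a + m)) c, by simp only [factorAt_add]⟩

lemma exists_factorAt_eq_of_isInfix {w : List A} (h : w <:+: factorAt x i n) :
    ∃ s, i ≤ s ∧ s + w.length ≤ i + n ∧ factorAt x s w.length = w := by
  obtain ⟨p, q, hpq⟩ := h
  have hn : p.length + w.length + q.length = n := by
    simpa [length_factorAt, add_assoc] using congrArg List.length hpq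
  rw [← hn, factorAt_add, factorAt_add] at hpq
  have hpw := (List.append_inj' hpq (by simp [length_factorAt])).1
  exact ⟨i + p.length, by omega, by omega,
    ((List.append_inj hpw (by simp [length_factorAt])).2).symm⟩

lemma factorAt_mem_Lang_iff :
    factorAt x k m ∈ Lang u ↔ ∃ i, factorAt x k m = factorAt u i m := by
  simp [Lang, length_factorAt]

lemma factorAt_mem_Lang_of_le (h : factorAt x i n ∈ Lang u) (hi : i ≤ j)
    (hj : j + m ≤ i + n) : factorAt x j m ∈ Lang u := by
  obtain ⟨s, hs⟩ := factorAt_mem_Lang_iff.1 h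
  obtain ⟨t, -, -, ht⟩ := exists_factorAt_eq_of_isInfix (hs ▸ factorAt_isInfix x hi hj)
  rw [length_factorAt] at ht
  exact factorAt_mem_Lang_iff.2 ⟨t, ht.symm⟩

end Factors

section Substitutions

variable {H : A → List A} {u : ℕ → A}

lemma wordMap_append (H : A → List A) (v w : List A) :
    wordMap H (v ++ w) = wordMap H v ++ wordMap H w :=
  List.flatMap_append

lemma wordMap_iterate_append (H : A → List A) (k : ℕ) (v w : List A) :
    (wordMap H)^[k] (v ++ w) = (wordMap H)^[k] v ++ (wordMap H)^[k] w :=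
  Function.Semiconj₂.iterate (wordMap_append H) k v w

lemma wordMap_iterate_nil (H : A → List A) (k : ℕ) : (wordMap H)^[k] [] = [] :=
  Function.iterate_fixed rfl k

lemma wordMap_iterate_isInfix (H : A → List A) (k : ℕ) {v w : List A} (h : v <:+: w) :
    (wordMap H)^[k] v <:+: (wordMap H)^[k] w := by
  obtain ⟨s, t, rfl⟩ := h
  exact ⟨(wordMap H)^[k] s, (wordMap H)^[k] t, by simp only [wordMap_iterate_append]⟩

lemma wordMap_iterate_singleton_isInfix (H : A → List A) (k : ℕ) {a : A} {w : List A}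
    (h : a ∈ w) : (wordMap H)^[k] [a] <:+: (wordMap H)^[k] w :=
  wordMap_iterate_isInfix H k ((List.singleton_infix_iff a w).2 h)

lemma mul_length_le_length_wordMap_iterate {c k : ℕ}
    (hc : ∀ a, c ≤ ((wordMap H)^[k] [a]).length) (w : List A) :
    c * w.length ≤ ((wordMap H)^[k] w).length := by
  induction w with
  | nil => simp
  | cons a w ih =>
    rw [← List.singleton_append, wordMap_iterate_append, List.length_append, List.length_append,
      mul_add]
    exact add_le_add (by simpa using hc a) ih

lemma length_wordMap_iterate_le_mul {c k : ℕ}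
    (hc : ∀ a, ((wordMap H)^[k] [a]).length ≤ c) (w : List A) :
    ((wordMap H)^[k] w).length ≤ c * w.length := by
  induction w with
  | nil => simp [wordMap_iterate_nil]
  | cons a w ih =>
    rw [← List.singleton_append, wordMap_iterate_append, List.length_append, List.length_append,
      mul_add]
    exact add_le_add (by simpa using hc a) ih

lemma length_le_length_wordMap (hne : ∀ a, H a ≠ []) (w : List A) :
    w.length ≤ (wordMap H w).length := by
  simpa using mul_length_le_length_wordMap_iterate (c := 1) (k := 1)
    (fun a ↦ by simpa [wordMap, Nat.one_le_iff_ne_zero] using hne a) w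

lemma length_le_length_wordMap_iterate (hne : ∀ a, H a ≠ []) (k : ℕ) (w : List A) :
    w.length ≤ ((wordMap H)^[k] w).length := by
  induction k with
  | zero => simp
  | succ k ih =>
    rw [Function.iterate_succ_apply']
    exact ih.trans (length_le_length_wordMap hne _)

lemma wordMap_prefixWord (hne : ∀ a, H a ≠ []) (hu : IsFixedPointSubst H u) (n : ℕ) :
    wordMap H (prefixWord u n) = prefixWord u (wordMap H (prefixWord u n)).length := by
  refine List.ext_getElem (length_prefixWord _ _).symm fun i hi _ ↦ ?_
  have hi' : i < (wordMap H (prefixWord u (i + 1))).length :=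
    (length_prefixWord u (i + 1)).ge.trans (length_le_length_wordMap hne _)
  have hui : u i = (wordMap H (prefixWord u (i + 1)))[i] := by
    rw [← List.getD_eq_getElem _ (u 0) hi']
    exact (congrFun hu i).symm
  suffices (wordMap H (prefixWord u n))[i] = (wordMap H (prefixWord u (i + 1)))[i] by
    rw [this, ← hui]
    simp [prefixWord]
  rcases le_total n (i + 1) with h | h
  · exact ((prefixWord_isPrefix u h).flatMap H).getElem hi
  · exact (((prefixWord_isPrefix u h).flatMap H).getElem hi').symm

lemma wordMap_iterate_prefixWord (hne : ∀ a, H a ≠ []) (hu : IsFixedPointSubst H u) (k n : ℕ) :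
    (wordMap H)^[k] (prefixWord u n) =
      prefixWord u ((wordMap H)^[k] (prefixWord u n)).length := by
  induction k with
  | zero => simp [length_prefixWord]
  | succ k ih =>
    rw [Function.iterate_succ_apply', ih]
    exact wordMap_prefixWord hne hu _

/-- The position in the fixed point `u` at which the image under `H^k` of its `j`-th letter
starts. -/
def imagePos (H : A → List A) (u : ℕ → A) (k j : ℕ) : ℕ :=
  ((wordMap H)^[k] (prefixWord u j)).length

lemma imagePos_add (H : A → List A) (u : ℕ → A) (k j n : ℕ) :
    imagePos H u k (j + n) = imagePos H u k j + ((wordMap H)^[k] (factorAt u j n)).length := by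
  simp only [imagePos, prefixWord_add, wordMap_iterate_append, List.length_append]

lemma imagePos_succ (H : A → List A) (u : ℕ → A) (k j : ℕ) :
    imagePos H u k (j + 1) = imagePos H u k j + ((wordMap H)^[k] [u j]).length := by
  rw [imagePos_add, factorAt_one]

lemma wordMap_iterate_factorAt (hne : ∀ a, H a ≠ []) (hu : IsFixedPointSubst H u) (k j n : ℕ) :
    (wordMap H)^[k] (factorAt u j n) =
      factorAt u (imagePos H u k j) ((wordMap H)^[k] (factorAt u j n)).length := by
  have h := wordMap_iterate_prefixWord hne hu k (j + n)
  rw [prefixWord_add, wordMap_iterate_append, List.length_append, prefixWord_add] at h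
  exact (List.append_inj h (length_prefixWord _ _).symm).2

lemma exists_imagePos_le_lt (hne : ∀ a, H a ≠ []) (u : ℕ → A) (k i : ℕ) :
    ∃ j, imagePos H u k j ≤ i ∧ i < imagePos H u k (j + 1) := by
  have hex : ∃ j, i < imagePos H u k (j + 1) :=
    ⟨i, (length_prefixWord u (i + 1)).ge.trans (length_le_length_wordMap_iterate hne k _)⟩
  classical
  refine ⟨Nat.find hex, ?_, Nat.find_spec hex⟩
  rcases h : Nat.find hex with _ | j
  · simp [imagePos, prefixWord, wordMap_iterate_nil]
  · exact not_lt.1 (Nat.find_min hex (h ▸ j.lt_succ_self))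

lemma exists_factorAt_isInfix_image_pair (hne : ∀ a, H a ≠ []) (hu : IsFixedPointSubst H u)
    {k m : ℕ} (hm : ∀ a, m ≤ ((wordMap H)^[k] [a]).length) (i : ℕ) :
    ∃ j, factorAt u i m <:+: (wordMap H)^[k] (factorAt u j 2) := by
  obtain ⟨j, hji, hij⟩ := exists_imagePos_le_lt hne u k i
  have hj := imagePos_succ H u k (j + 1)
  have hj' := imagePos_add H u k j 2
  have hmj := hm (u (j + 1))
  refine ⟨j, wordMap_iterate_factorAt hne hu k j 2 ▸ factorAt_isInfix u hji ?_⟩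
  simp only [add_assoc, Nat.reduceAdd] at hj
  omega

lemma exists_image_isInfix_factorAt (hne : ∀ a, H a ≠ []) (hu : IsFixedPointSubst H u)
    {k L : ℕ} (hL : ∀ a, ((wordMap H)^[k] [a]).length ≤ L) (i : ℕ) :
    ∃ a, (wordMap H)^[k] [a] <:+: factorAt u i (2 * L) := by
  obtain ⟨j, hji, hij⟩ := exists_imagePos_le_lt hne u k i
  have hj := imagePos_succ H u k j
  have hLj := hL (u j)
  have hLj' := hL (u (j + 1))
  refine ⟨u (j + 1), ?_⟩
  rw [← factorAt_one u, wordMap_iterate_factorAt hne hu k (j + 1) 1, factorAt_one]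
  exact factorAt_isInfix u hij.le (by omega)

end Substitutions

section LinearRecurrence

/-- `u` is linearly recurrent with constant `R`: every factor of length `m` of `u` occurs in every
window of length `R * m` of `u`. -/
def LinearlyRecurrentWith (R : ℕ) (u : ℕ → A) : Prop :=
  ∀ m i j, ∃ s, j ≤ s ∧ s + m ≤ j + R * m ∧ factorAt u s m = factorAt u i m

lemma exists_forall_exists_le_eq {β : Type*} [Finite β] (f : ℕ → β) :
    ∃ N, ∀ j, ∃ i ≤ N, f i = f j := by
  obtain ⟨N, hN⟩ := Finite.bddAbove_range fun b ↦ sInf (f ⁻¹' {b})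
  exact ⟨N, fun j ↦ ⟨_, hN ⟨f j, rfl⟩, Nat.sInf_mem (s := f ⁻¹' {f j}) ⟨j, rfl⟩⟩⟩

lemma exists_length_wordMap_iterate_le [Finite A] (H : A → List A) (k : ℕ) :
    ∃ M, ∀ a, ((wordMap H)^[k] [a]).length ≤ M := by
  obtain ⟨M, hM⟩ := Finite.bddAbove_range fun a ↦ ((wordMap H)^[k] [a]).length
  exact ⟨M, fun a ↦ hM ⟨a, rfl⟩⟩

namespace PrimitiveSubst

variable {H : A → List A} {u : ℕ → A}

lemma ne_nil (hprim : PrimitiveSubst H) (a : A) : H a ≠ [] := by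
  obtain ⟨k, hk, hmem⟩ := hprim
  obtain ⟨k, rfl⟩ := Nat.exists_eq_add_of_lt hk
  intro ha
  simpa [wordMap, ha, wordMap_iterate_nil, Function.iterate_succ_apply] using hmem a a

lemma surjective (hprim : PrimitiveSubst H) (hu : IsFixedPointSubst H u) :
    Function.Surjective u := by
  obtain ⟨k, -, hmem⟩ := id hprim
  intro a
  have ha := hmem (u 0) a
  rw [← factorAt_one, wordMap_iterate_factorAt hprim.ne_nil hu, factorAt, List.mem_map] at ha
  obtain ⟨i, -, hi⟩ := ha
  exact ⟨_, hi⟩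

lemma exists_le_length_image [Nontrivial A] (hprim : PrimitiveSubst H) (m : ℕ) :
    ∃ k, ∀ a, m ≤ ((wordMap H)^[k] [a]).length := by
  obtain ⟨p, -, hmem⟩ := id hprim
  have htwo (a : A) : 2 ≤ ((wordMap H)^[p] [a]).length := by
    obtain ⟨b, c, hbc⟩ := exists_pair_ne A
    by_contra! hlt
    have hb := hmem a b
    have hc := hmem a c
    obtain ⟨d, hd⟩ := List.length_eq_one_iff.1
      (show ((wordMap H)^[p] [a]).length = 1 by have := List.length_pos_of_mem hb; omega)
    rw [hd, List.mem_singleton] at hb hc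
    exact hbc (hb.trans hc.symm)
  induction m with
  | zero => exact ⟨0, by simp⟩
  | succ m ih =>
    obtain ⟨k, hk⟩ := ih
    refine ⟨p + k, fun a ↦ ?_⟩
    have hdouble := mul_length_le_length_wordMap_iterate htwo ((wordMap H)^[k] [a])
    have hpos := length_le_length_wordMap_iterate hprim.ne_nil k [a]
    have hka := hk a
    rw [Function.iterate_add_apply]
    simp only [List.length_singleton] at hpos
    omega

variable [Finite A]

lemma exists_length_image_le_mul (hprim : PrimitiveSubst H) :
    ∃ C, ∀ k a b, ((wordMap H)^[k] [b]).length ≤ C * ((wordMap H)^[k] [a]).length := by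
  obtain ⟨p, -, hmem⟩ := id hprim
  obtain ⟨M, hM⟩ := exists_length_wordMap_iterate_le H p
  refine ⟨M, fun k a b ↦ ?_⟩
  have hba := (wordMap_iterate_singleton_isInfix H k (hmem a b)).length_le
  rw [← Function.iterate_add_apply, add_comm, Function.iterate_add_apply] at hba
  exact hba.trans (length_wordMap_iterate_le_mul hM _)

lemma exists_length_image_mem_Icc [Nontrivial A] (hprim : PrimitiveSubst H) :
    ∃ C, ∀ m, 0 < m → ∃ k, ∀ a, ((wordMap H)^[k] [a]).length ∈ Set.Icc m (C * m) := by
  obtain ⟨C, hbal⟩ := hprim.exists_length_image_le_mul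
  obtain ⟨M, hM⟩ := exists_length_wordMap_iterate_le H 1
  refine ⟨M * C + 1, fun m hm ↦ ?_⟩
  have hgrow := hprim.exists_le_length_image m
  classical
  refine ⟨Nat.find hgrow, fun a ↦ ⟨Nat.find_spec hgrow a, ?_⟩⟩
  rcases hk : Nat.find hgrow with _ | k
  · simp only [Function.iterate_zero, id, List.length_singleton]
    exact Nat.one_le_iff_ne_zero.2 (by positivity)
  · obtain ⟨b, hb⟩ := not_forall.1 (Nat.find_min hgrow (show k < _ by omega))
    calc ((wordMap H)^[k + 1] [a]).length
        = (wordMap H ((wordMap H)^[k] [a])).length := by rw [Function.iterate_succ_apply']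
      _ ≤ M * ((wordMap H)^[k] [a]).length := length_wordMap_iterate_le_mul hM _
      _ ≤ M * (C * m) := by gcongr; exact (hbal k b a).trans (by gcongr; exact (not_le.1 hb).le)
      _ ≤ (M * C + 1) * m := by linarith

lemma exists_pair_isInfix_image [Nontrivial A] (hprim : PrimitiveSubst H)
    (hu : IsFixedPointSubst H u) :
    ∃ q, ∀ j a, factorAt u j 2 <:+: (wordMap H)^[q] [a] := by
  obtain ⟨N, hN⟩ := exists_forall_exists_le_eq fun i ↦ (u i, u (i + 1))
  obtain ⟨k, hk⟩ := hprim.exists_le_length_image (N + 2)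
  obtain ⟨p, -, hmem⟩ := id hprim
  refine ⟨k + p, fun j a ↦ ?_⟩
  obtain ⟨i, hiN, hij⟩ := hN j
  obtain ⟨hi, hi'⟩ := Prod.mk.inj hij
  have himage : (wordMap H)^[k] [u 0] = factorAt u 0 ((wordMap H)^[k] [u 0]).length := by
    simpa [factorAt_one, imagePos, prefixWord, wordMap_iterate_nil] using
      wordMap_iterate_factorAt hprim.ne_nil hu k 0 1
  have hu0 : factorAt u j 2 <:+: (wordMap H)^[k] [u 0] := by
    have hku := hk (u 0)
    rw [factorAt_two, ← hi, ← hi', ← factorAt_two, himage]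
    exact factorAt_isInfix u i.zero_le (by omega)
  rw [Function.iterate_add_apply]
  exact hu0.trans (wordMap_iterate_singleton_isInfix H k (hmem a (u 0)))

/-- Take `k` with all `H^k(a)` of length comparable to `m`. A factor of length `m` then lies in
some `H^k(bc)` with `bc` a factor of `u`, hence in every `H^(k+q)(a)` once every `H^q(a)` contains
every factor of length two. -/
lemma exists_linearlyRecurrentWith (hprim : PrimitiveSubst H) (hu : IsFixedPointSubst H u) :
    ∃ R, LinearlyRecurrentWith R u := by
  cases subsingleton_or_nontrivial A
  · refine ⟨1, fun m i j ↦ ⟨j, le_rfl, by omega, ?_⟩⟩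
    exact factorAt_eq_factorAt_iff.2 fun _ _ ↦ Subsingleton.elim _ _
  obtain ⟨C, hC⟩ := hprim.exists_length_image_mem_Icc
  obtain ⟨q, hq⟩ := hprim.exists_pair_isInfix_image hu
  obtain ⟨M, hM⟩ := exists_length_wordMap_iterate_le H q
  refine ⟨2 * (C * M), fun m i j ↦ ?_⟩
  rcases m.eq_zero_or_pos with rfl | hm
  · exact ⟨j, le_rfl, by simp, rfl⟩
  obtain ⟨k, hk⟩ := hC m hm
  have hlen (a : A) : ((wordMap H)^[k + q] [a]).length ≤ C * m * M := by
    rw [Function.iterate_add_apply]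
    exact (length_wordMap_iterate_le_mul (fun a ↦ (hk a).2) _).trans (by gcongr; exact hM a)
  obtain ⟨a, ha⟩ := exists_image_isInfix_factorAt hprim.ne_nil hu hlen j
  obtain ⟨l, hl⟩ := exists_factorAt_isInfix_image_pair hprim.ne_nil hu (fun a ↦ (hk a).1) i
  have hpair := wordMap_iterate_isInfix H k (hq l a)
  rw [← Function.iterate_add_apply] at hpair
  obtain ⟨s, hjs, hsj, hs⟩ := exists_factorAt_eq_of_isInfix ((hl.trans hpair).trans ha)
  rw [length_factorAt] at hsj hs
  exact ⟨s, hjs, by linarith, hs⟩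

end PrimitiveSubst

end LinearRecurrence

section LeftExtensions

variable {R : ℕ} {u : ℕ → A}

lemma LinearlyRecurrentWith.one_le (hrec : LinearlyRecurrentWith R u) : 1 ≤ R := by
  obtain ⟨s, hs, hsR, -⟩ := hrec 1 0 0
  omega

lemma LinearlyRecurrentWith.lt_of_factorAt_eq_factorAt_add (hrec : LinearlyRecurrentWith R u)
    (hper : ¬ PeriodicSeq u) {t g m : ℕ} (hg : 0 < g)
    (h : factorAt u t m = factorAt u (t + g) m) : m < 2 * R * g := by
  by_contra! hm
  refine hper ⟨g, hg, fun i ↦ ?_⟩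
  obtain ⟨s, hts, hst, hs⟩ := hrec (g + 1) i t
  obtain ⟨c, rfl⟩ := Nat.exists_eq_add_of_le hts
  have hR := hrec.one_le
  rw [factorAt_eq_factorAt_iff] at h hs
  calc u (i + g) = u (t + c + g) := (hs g (by omega)).symm
    _ = u (t + g + c) := by congr 1; omega
    _ = u (t + c) := (h c (by nlinarith)).symm
    _ = u i := by simpa using hs 0 (by omega)

lemma encard_le_of_separated {α : Type*} {S : Set α} {f : α → ℕ} {b K : ℕ}
    (hlt : ∀ z ∈ S, f z < b * K)
    (hsep : ∀ z ∈ S, ∀ w ∈ S, z ≠ w → f z ≤ f w → f z + b ≤ f w) : S.encard ≤ K := by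
  have hdiv {z w : α} (hz : z ∈ S) (hw : w ∈ S) (hzw : z ≠ w) (h : f z ≤ f w) :
      f z / b < f w / b := by
    have hb : 0 < b := Nat.pos_of_mul_pos_right (Nat.zero_lt_of_lt (hlt z hz))
    rw [Nat.lt_iff_add_one_le, ← Nat.add_div_right _ hb]
    exact Nat.div_le_div_right (hsep z hz w hw hzw h)
  have hinj : S.InjOn fun z ↦ f z / b := fun z hz w hw h ↦ by
    by_contra hzw
    rcases le_total (f z) (f w) with hle | hle
    · exact (hdiv hz hw hzw hle).ne h
    · exact (hdiv hw hz (Ne.symm hzw) hle).ne' h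
  calc S.encard ≤ (Finset.range K : Set ℕ).encard :=
        Set.encard_le_encard_of_injOn
          (fun z hz ↦ by simpa using Nat.div_lt_of_lt_mul (hlt z hz)) hinj
    _ = K := by rw [Set.encard_coe_eq_coe_finsetCard, Finset.card_range]

/-- The words `y` that extend `x` by `b` letters on the left and whose prefix of length `2 b - 1`,
overlapping `x` in all but one of its first `b` letters, is a factor of `u`. -/
def leftExtensions (u : ℕ → A) (b : ℕ) (x : ℕ → A) : Set (ℕ → A) :=
  {y | shift^[b] y = x ∧ factorAt y 0 (2 * b - 1) ∈ Lang u}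

/-- Two extensions whose prefixes occur at positions `s < t` of `u` give two occurrences, at
distance `t - s`, of the prefix of `x` of length `b - 1`; aperiodicity bounds `t - s` below. -/
lemma encard_leftExtensions_le (hrec : LinearlyRecurrentWith R u) (hper : ¬ PeriodicSeq u)
    {b : ℕ} (hb : 0 < b) (x : ℕ → A) : (leftExtensions u b x).encard ≤ (4 * R ^ 2 : ℕ) := by
  have hocc : ∀ y ∈ leftExtensions u b x, ∃ s, s + (2 * b - 1) ≤ R * (2 * b - 1) ∧
      factorAt u s (2 * b - 1) = factorAt y 0 (2 * b - 1) := fun y hy ↦ by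
    obtain ⟨i, hi⟩ := factorAt_mem_Lang_iff.1 hy.2
    obtain ⟨s, -, hs, hsi⟩ := hrec (2 * b - 1) i 0
    exact ⟨s, by simpa using hs, hsi.trans hi.symm⟩
  choose! s hsR hs using hocc
  have hR := hrec.one_le
  have hsb {y : ℕ → A} (hy : y ∈ leftExtensions u b x) :
      factorAt u (s y + b) (b - 1) = factorAt x 0 (b - 1) := by
    rw [← hy.1, factorAt_shift_iterate, factorAt_eq_factorAt_iff]
    intro r hr
    simpa [add_assoc] using factorAt_eq_factorAt_iff.1 (hs y hy) (b + r) (by omega)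
  refine encard_le_of_separated (f := fun y ↦ 2 * R * s y) (b := b) (fun y hy ↦ ?_)
    fun y hy z hz hyz hle ↦ ?_
  · have hsy : s y < R * (2 * b) := by
      have := hsR y hy
      have := Nat.mul_le_mul_left R (show 2 * b - 1 ≤ 2 * b by omega)
      omega
    calc 2 * R * s y < 2 * R * (R * (2 * b)) := by gcongr
      _ = b * (4 * R ^ 2) := by ring
  · obtain ⟨g, hg⟩ := Nat.exists_eq_add_of_le (Nat.le_of_mul_le_mul_left hle (by positivity))
    rcases g.eq_zero_or_pos with rfl | hgpos
    · refine absurd (eq_of_shift_iterate_eq (hy.1.trans hz.1.symm) fun r hr ↦ ?_) hyz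
      have hzy : factorAt y 0 (2 * b - 1) = factorAt z 0 (2 * b - 1) := by
        rw [← hs y hy, ← hs z hz, hg, add_zero]
      simpa only [zero_add] using factorAt_eq_factorAt_iff.1 hzy r (by omega)
    · have hlt := hrec.lt_of_factorAt_eq_factorAt_add hper hgpos (t := s y + b) (m := b - 1)
        (by rw [hsb hy, ← hsb hz, hg]; congr 1; omega)
      rw [hg, mul_add]
      omega

end LeftExtensions

section DyadicPreimages

lemma encard_biUnion_le_sum {α ι : Type*} (I : Finset ι) {s : ι → Set α} {b : ι → ℕ}
    (hs : ∀ i ∈ I, (s i).encard ≤ b i) : (⋃ i ∈ I, s i).encard ≤ (∑ i ∈ I, b i : ℕ) := by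
  rw [Nat.cast_sum]
  exact (Finset.set_encard_biUnion_le I s).trans (Finset.sum_le_sum hs)

lemma encard_biUnion_le_mul {α β : Type*} {s : Set α} {t : α → Set β} {m n : ℕ}
    (hs : s.encard ≤ m) (ht : ∀ a ∈ s, (t a).encard ≤ n) :
    (⋃ a ∈ s, t a).encard ≤ (m * n : ℕ) := by
  have hfin := Set.finite_of_encard_le_coe hs
  lift s to Finset α using hfin
  rw [Set.encard_coe_eq_coe_finsetCard, Nat.cast_le] at hs
  calc (⋃ a ∈ s, t a).encard ≤ (∑ _a ∈ s, n : ℕ) := encard_biUnion_le_sum s ht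
    _ ≤ (m * n : ℕ) := by
      rw [Finset.sum_const, smul_eq_mul]
      exact_mod_cast Nat.mul_le_mul_right n hs

/-- The pairs `(n, y)` with `shift^[n] y = x` such that `x` is turned into `y` by `l` successive
left extensions of dyadic lengths `2 ^ e₁, …, 2 ^ e_l`, where `e₁ ≤ e + 1` and
`e_{i+1} ≤ e_i + 1`. -/
def dyadicPreimages (u : ℕ → A) : ℕ → ℕ → (ℕ → A) → Set (ℕ × (ℕ → A))
  | 0, _, x => {(0, x)}
  | l + 1, e, x => ⋃ i ∈ Finset.range (e + 2), ⋃ z ∈ leftExtensions u (2 ^ i) x,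
      (fun q ↦ (q.1 + 2 ^ i, q.2)) '' dyadicPreimages u l i z

lemma encard_dyadicPreimages_le {u : ℕ → A} {C : ℕ}
    (hC : ∀ b, 0 < b → ∀ x, (leftExtensions u b x).encard ≤ C) (l e : ℕ) (x : ℕ → A) :
    (dyadicPreimages u l e x).encard ≤ ((4 * C) ^ l * 2 ^ e : ℕ) := by
  induction l generalizing e x with
  | zero =>
    rw [dyadicPreimages, Set.encard_singleton]
    exact_mod_cast Nat.one_le_iff_ne_zero.2 (by positivity)
  | succ l ih =>
    have hstep (i : ℕ) : (⋃ z ∈ leftExtensions u (2 ^ i) x,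
        (fun q ↦ (q.1 + 2 ^ i, q.2)) '' dyadicPreimages u l i z).encard ≤
          (C * ((4 * C) ^ l * 2 ^ i) : ℕ) :=
      encard_biUnion_le_mul (hC _ (by positivity) x) fun z _ ↦
        (Set.encard_image_le _ _).trans (ih i z)
    refine (encard_biUnion_le_sum _ fun i _ ↦ hstep i).trans (Nat.cast_le.2 ?_)
    calc ∑ i ∈ Finset.range (e + 2), C * ((4 * C) ^ l * 2 ^ i)
        = C * (4 * C) ^ l * ∑ i ∈ Finset.range (e + 2), 2 ^ i := by
          rw [Finset.mul_sum]; simp only [mul_assoc]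
      _ ≤ C * (4 * C) ^ l * 2 ^ (e + 2) := by
          gcongr
          exact (Nat.geomSum_lt le_rfl fun i hi ↦ Finset.mem_range.1 hi).le
      _ = (4 * C) ^ (l + 1) * 2 ^ e := by ring

end DyadicPreimages

section GreedyDescent

variable {u y : ℕ → A} {n k : ℕ}

open scoped Classical in
/-- The largest `e` such that the factor of `y` of length `2 * 2 ^ e - 1` starting at `n - 2 ^ e`
exists and belongs to the language of `u`; junk value `0` if there is none. -/
noncomputable def greedyScale (u y : ℕ → A) (n : ℕ) : ℕ :=
  Nat.findGreatest (fun e ↦ 2 ^ e ≤ n ∧ factorAt y (n - 2 ^ e) (2 * 2 ^ e - 1) ∈ Lang u) n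

lemma greedyScale_zero (u y : ℕ → A) : greedyScale u y 0 = 0 := by
  simp [greedyScale]

lemma factorAt_one_mem_Lang (hsurj : Function.Surjective u) (y : ℕ → A) (n : ℕ) :
    factorAt y n 1 ∈ Lang u := by
  obtain ⟨i, hi⟩ := hsurj (y n)
  exact factorAt_mem_Lang_iff.2 ⟨i, by rw [factorAt_one, factorAt_one, hi]⟩

lemma greedyScale_spec (hsurj : Function.Surjective u) (y : ℕ → A) (hn : 0 < n) :
    2 ^ greedyScale u y n ≤ n ∧
      factorAt y (n - 2 ^ greedyScale u y n) (2 * 2 ^ greedyScale u y n - 1) ∈ Lang u := by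
  classical
  exact Nat.findGreatest_spec
    (P := fun e ↦ 2 ^ e ≤ n ∧ factorAt y (n - 2 ^ e) (2 * 2 ^ e - 1) ∈ Lang u)
    n.zero_le ⟨hn, factorAt_one_mem_Lang hsurj y _⟩

lemma le_greedyScale {e : ℕ} (he : 2 ^ e ≤ n)
    (hmem : factorAt y (n - 2 ^ e) (2 * 2 ^ e - 1) ∈ Lang u) : e ≤ greedyScale u y n := by
  classical
  exact Nat.le_findGreatest (e.lt_two_pow_self.le.trans he) ⟨he, hmem⟩

lemma factorAt_notMem_Lang_of_greedyScale_lt {e : ℕ} (he : 2 ^ e ≤ n)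
    (hlt : greedyScale u y n < e) :
    factorAt y (n - 2 ^ e) (2 * 2 ^ e - 1) ∉ Lang u :=
  fun hmem ↦ hlt.not_ge (le_greedyScale he hmem)

lemma greedyScale_sub_lt (hsurj : Function.Surjective u) (y : ℕ → A) (n : ℕ) :
    greedyScale u y (n - 2 ^ greedyScale u y n) < greedyScale u y n + 2 := by
  set e := greedyScale u y n
  by_contra! hle
  have hpos : 0 < n - 2 ^ e := by
    by_contra! h0
    rw [Nat.le_zero.1 h0, greedyScale_zero] at hle
    omega
  obtain ⟨hfit, hmem⟩ := greedyScale_spec hsurj y hpos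
  have hpow := Nat.pow_le_pow_right two_pos hle
  rw [pow_add] at hpow
  have := le_greedyScale (u := u) (y := y) (n := n) (e := e + 1) (by rw [pow_succ]; omega)
    (factorAt_mem_Lang_of_le hmem (by rw [pow_succ]; omega) (by rw [pow_succ]; omega))
  omega

lemma greedyScale_le (hsurj : Function.Surjective u) {N : ℕ} (hN : factorAt y n N ∉ Lang u) :
    greedyScale u y n ≤ N := by
  by_contra! hlt
  rcases n.eq_zero_or_pos with rfl | hn
  · rw [greedyScale_zero] at hlt
    exact hlt.not_ge N.zero_le
  obtain ⟨hfit, hmem⟩ := greedyScale_spec hsurj y hn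
  have := (greedyScale u y n).lt_two_pow_self
  exact hN (factorAt_mem_Lang_of_le hmem (Nat.sub_le _ _) (by omega))

/-- The times `n, n - 2 ^ e n, …` visited when stepping down from `n` to `0` by `2 ^ e k` at `k`. -/
def descent (e : ℕ → ℕ) : ℕ → Finset ℕ
  | 0 => ∅
  | n + 1 => insert (n + 1) (descent e (n + 1 - 2 ^ e (n + 1)))
decreasing_by exact Nat.sub_lt n.succ_pos (by positivity)

variable {e : ℕ → ℕ}

lemma descent_eq_insert (e : ℕ → ℕ) (hn : 0 < n) :
    descent e n = insert n (descent e (n - 2 ^ e n)) := by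
  obtain ⟨n, rfl⟩ := Nat.exists_eq_add_one.2 hn
  rw [descent]

lemma mem_Icc_of_mem_descent (hk : k ∈ descent e n) : k ∈ Set.Icc 1 n := by
  induction n using Nat.strong_induction_on with
  | _ n ih =>
    rcases n.eq_zero_or_pos with rfl | hn
    · simp [descent] at hk
    rw [descent_eq_insert e hn, Finset.mem_insert] at hk
    rcases hk with rfl | hk
    · exact ⟨hn, le_rfl⟩
    · have := ih _ (Nat.sub_lt hn (by positivity)) hk
      exact ⟨this.1, this.2.trans (Nat.sub_le _ _)⟩

lemma notMem_descent_sub (e : ℕ → ℕ) (hn : 0 < n) : n ∉ descent e (n - 2 ^ e n) := fun h ↦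
  (mem_Icc_of_mem_descent h).2.not_gt (Nat.sub_lt hn (by positivity))

lemma add_two_pow_le_of_mem_descent (he : ∀ k, 0 < k → 2 ^ e k ≤ k) {k' : ℕ}
    (hk : k ∈ descent e n) (hk' : k' ∈ descent e n) (hlt : k < k') : k + 2 ^ e k' ≤ k' := by
  induction n using Nat.strong_induction_on with
  | _ n ih =>
    rcases n.eq_zero_or_pos with rfl | hn
    · simp [descent] at hk
    have hfit := he n hn
    have hlow {j : ℕ} (hj : j ∈ descent e (n - 2 ^ e n)) := (mem_Icc_of_mem_descent hj).2
    have hpos : 0 < 2 ^ e n := by positivity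
    rw [descent_eq_insert e hn, Finset.mem_insert] at hk hk'
    rcases hk with rfl | hk <;> rcases hk' with rfl | hk'
    · omega
    · have := hlow hk'; omega
    · have := hlow hk; omega
    · exact ih _ (Nat.sub_lt hn hpos) hk hk'

lemma mem_dyadicPreimages (hsurj : Function.Surjective u) (y : ℕ → A) {s : ℕ}
    (hs : greedyScale u y n < s + 2) :
    (n, y) ∈ dyadicPreimages u (descent (greedyScale u y) n).card s (shift^[n] y) := by
  induction n using Nat.strong_induction_on generalizing s with
  | _ n ih =>
    rcases n.eq_zero_or_pos with rfl | hn
    · simp [descent, dyadicPreimages]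
    obtain ⟨hfit, hmem⟩ := greedyScale_spec hsurj y hn
    have hsub := Nat.sub_add_cancel hfit
    rw [descent_eq_insert _ hn, Finset.card_insert_of_notMem (notMem_descent_sub _ hn),
      dyadicPreimages, Set.mem_iUnion₂]
    refine ⟨greedyScale u y n, Finset.mem_range.2 hs, Set.mem_iUnion₂.2
      ⟨shift^[n - 2 ^ greedyScale u y n] y, ⟨?_, by rwa [factorAt_shift_iterate]⟩,
        _, ih _ (Nat.sub_lt hn (by positivity)) (greedyScale_sub_lt hsurj y n), by simp [hsub]⟩⟩
    rw [← Function.iterate_add_apply, add_comm, hsub]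

end GreedyDescent

section StepCount

open scoped Finset

variable {e : ℕ → ℕ} {a : ℕ → ℝ} {n N : ℕ}

/-- A step with `k < 3 * 2 ^ e k` multiplies the remaining time by less than `2 / 3`, whence the
logarithmic bound of `card_steep_le`. -/
lemma three_pow_card_steep_le (he : ∀ k, 0 < k → 2 ^ e k ≤ k) (n : ℕ) :
    3 ^ #{k ∈ descent e n | k < 3 * 2 ^ e k} ≤
      2 ^ #{k ∈ descent e n | k < 3 * 2 ^ e k} * (2 * n + 1) := by
  induction n using Nat.strong_induction_on with
  | _ n ih =>
    rcases n.eq_zero_or_pos with rfl | hn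
    · simp [descent]
    have hfit := he n hn
    have hih := ih _ (Nat.sub_lt hn (show 0 < 2 ^ e n by positivity))
    rw [descent_eq_insert e hn, Finset.filter_insert]
    split_ifs with hsteep
    · rw [Finset.card_insert_of_notMem
        fun h ↦ notMem_descent_sub e hn (Finset.mem_filter.1 h).1, pow_succ, pow_succ]
      calc _ ≤ 2 ^ _ * (2 * (n - 2 ^ e n) + 1) * 3 := Nat.mul_le_mul_right 3 hih
        _ = 2 ^ _ * ((2 * (n - 2 ^ e n) + 1) * 3) := mul_assoc _ _ _
        _ ≤ 2 ^ _ * (2 * (2 * n + 1)) := Nat.mul_le_mul_left _ (by omega)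
        _ = _ := by ring
    · exact hih.trans (Nat.mul_le_mul_left _ (by omega))

lemma card_steep_le (he : ∀ k, 0 < k → 2 ^ e k ≤ k) (n : ℕ) :
    (#{k ∈ descent e n | k < 3 * 2 ^ e k} : ℝ) ≤ 3 * Real.log (2 * n + 1) := by
  set c := #{k ∈ descent e n | k < 3 * 2 ^ e k}
  have hpow : (3 / 2 : ℝ) ^ c ≤ 2 * n + 1 := by
    rw [div_pow, div_le_iff₀' (by positivity)]
    exact_mod_cast three_pow_card_steep_le he n
  have hlog := Real.log_le_log (by positivity) hpow
  rw [Real.log_pow] at hlog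
  have hthird : (1 / 3 : ℝ) ≤ Real.log (3 / 2) := by
    convert Real.one_sub_inv_le_log_of_pos (x := 3 / 2) (by norm_num) using 1
    norm_num
  have := mul_le_mul_of_nonneg_left hthird (Nat.cast_nonneg (α := ℝ) c)
  linarith

lemma sum_half_pow_le {E : Finset ℕ} {m : ℝ} (hm : 0 ≤ m) (hE : ∀ i ∈ E, (1 / 2 : ℝ) ^ i ≤ m) :
    ∑ i ∈ E, (1 / 2 : ℝ) ^ i ≤ 2 * m := by
  rcases E.eq_empty_or_nonempty with rfl | hne
  · simpa using hm
  calc ∑ i ∈ E, (1 / 2 : ℝ) ^ i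
      ≤ ∑ i ∈ Finset.Ico (E.min' hne) (E.max' hne + 1), (1 / 2 : ℝ) ^ i :=
        Finset.sum_le_sum_of_subset_of_nonneg
          (fun i hi ↦ Finset.mem_Ico.2 ⟨E.min'_le i hi, Nat.lt_succ_of_le (E.le_max' i hi)⟩)
          fun _ _ _ ↦ by positivity
    _ ≤ (1 / 2 : ℝ) ^ E.min' hne / (1 - 1 / 2) :=
        geom_sum_Ico_le_of_lt_one (by norm_num) (by norm_num)
    _ ≤ 2 * m := by
        rw [div_le_iff₀ (by norm_num)]
        linarith [hE _ (E.min'_mem hne)]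

/-- Spread the unit mass of each `K ∈ T` uniformly over the window
`[K - 3 * 2 ^ e K, K - 2 * 2 ^ e K)`; by separation, windows containing a given point have
pairwise distinct exponents. -/
lemma card_le_two_mul_sum {T : Finset ℕ} (hle : ∀ K ∈ T, 3 * 2 ^ e K ≤ K ∧ K ≤ n)
    (hsep : ∀ K ∈ T, ∀ K' ∈ T, K < K' → K + 2 ^ e K' ≤ K') (ha : ∀ k < n, 0 ≤ a k)
    (hwin : ∀ K ∈ T, ∀ k ∈ Finset.Ico (K - 3 * 2 ^ e K) (K - 2 * 2 ^ e K),
      (1 / 2 : ℝ) ^ e K ≤ a k) :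
    (#T : ℝ) ≤ 2 * ∑ k ∈ Finset.range n, a k := by
  let window (K : ℕ) := Finset.Ico (K - 3 * 2 ^ e K) (K - 2 * 2 ^ e K)
  have hmass : ∀ K ∈ T, ∑ _k ∈ window K, (1 / 2 : ℝ) ^ e K = 1 := fun K hK ↦ by
    have hcard : #(window K) = 2 ^ e K := by
      have := (hle K hK).1
      rw [Nat.card_Ico]
      omega
    rw [Finset.sum_const, hcard, nsmul_eq_mul, Nat.cast_pow, ← mul_pow]
    norm_num
  have hinj (k : ℕ) : Set.InjOn e ({K ∈ T | k ∈ window K} : Finset ℕ) := fun K hK K' hK' heq ↦ by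
    simp only [Finset.coe_filter, Set.mem_ofPred_eq, window, Finset.mem_Ico] at hK hK'
    have hK3 := (hle K hK.1).1
    have hK3' := (hle K' hK'.1).1
    by_contra hne
    rcases Nat.lt_or_gt_of_ne hne with hlt | hlt
    · have := hsep K hK.1 K' hK'.1 hlt
      rw [heq] at hK hK3
      omega
    · have := hsep K' hK'.1 K hK.1 hlt
      rw [heq] at hK hK3 this
      omega
  calc (#T : ℝ) = ∑ K ∈ T, ∑ _k ∈ window K, (1 / 2 : ℝ) ^ e K := by
        rw [Finset.sum_congr rfl hmass, Finset.sum_const, nsmul_one]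
    _ = ∑ k ∈ Finset.range n, ∑ K ∈ T with k ∈ window K, (1 / 2 : ℝ) ^ e K := by
        refine Finset.sum_comm' fun K k ↦ ?_
        simp only [Finset.mem_filter, Finset.mem_range, window, Finset.mem_Ico]
        refine ⟨fun h ↦ ⟨h, ?_⟩, fun h ↦ h.1⟩
        have := hle K h.1
        omega
    _ ≤ ∑ k ∈ Finset.range n, 2 * a k := Finset.sum_le_sum fun k hk ↦ by
        rw [← Finset.sum_image (f := fun i ↦ (1 / 2 : ℝ) ^ i) (hinj k)]
        refine sum_half_pow_le (ha k (Finset.mem_range.1 hk)) fun i hi ↦ ?_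
        obtain ⟨K, hK, rfl⟩ := Finset.mem_image.1 hi
        exact hwin K (Finset.mem_filter.1 hK).1 k (Finset.mem_filter.1 hK).2
    _ = 2 * ∑ k ∈ Finset.range n, a k := (Finset.mul_sum _ _ _).symm

lemma log_sub_log_le_sum (ha : ∀ k < n, 1 / ((n + N - k : ℕ) : ℝ) ≤ a k) :
    Real.log (n + N + 1) - Real.log (N + 1) ≤ ∑ k ∈ Finset.range n, a k := by
  have htele := Finset.sum_range_sub' (fun k : ℕ ↦ Real.log (n + N + 1 - k)) n
  simp only [Nat.cast_zero, sub_zero] at htele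
  rw [show (N : ℝ) + 1 = n + N + 1 - n by ring, ← htele]
  refine Finset.sum_le_sum fun k hk ↦ (ha k (Finset.mem_range.1 hk)).trans' ?_
  have hkn : k < n := Finset.mem_range.1 hk
  have hpos : (0 : ℝ) < (n + N - k : ℕ) := by exact_mod_cast (by omega : 0 < n + N - k)
  have hcast : ((n + N - k : ℕ) : ℝ) = n + N - k := by
    rw [Nat.cast_sub (by omega), Nat.cast_add]
  rw [show (n : ℝ) + N + 1 - k = (n + N - k : ℕ) + 1 by rw [hcast]; ring,
    show (n : ℝ) + N + 1 - (k + 1 : ℕ) = (n + N - k : ℕ) by rw [hcast]; push_cast; ring,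
    ← Real.log_div (by positivity) hpos.ne']
  refine (Real.log_le_sub_one_of_pos (by positivity)).trans_eq ?_
  field_simp
  ring

variable {u y : ℕ → A}

lemma factorAt_notMem_Lang_of_mem_window {k K : ℕ} (hK : 3 * 2 ^ greedyScale u y K ≤ K)
    (hk : k ∈ Finset.Ico (K - 3 * 2 ^ greedyScale u y K) (K - 2 * 2 ^ greedyScale u y K)) :
    factorAt y k (5 * 2 ^ greedyScale u y K) ∉ Lang u := fun hmem ↦ by
  rw [Finset.mem_Ico] at hk
  have := pow_succ 2 (greedyScale u y K)
  exact factorAt_notMem_Lang_of_greedyScale_lt (n := K) (by omega) (Nat.lt_succ_self _)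
    (factorAt_mem_Lang_of_le hmem (by omega) (by omega))

lemma card_not_steep_le (hsurj : Function.Surjective u) (ha0 : ∀ k < n, 0 ≤ a k)
    (ha : ∀ k < n, ∀ m, factorAt y k m ∉ Lang u → 1 / (m : ℝ) ≤ a k) :
    (#{k ∈ descent (greedyScale u y) n | ¬ k < 3 * 2 ^ greedyScale u y k} : ℝ) ≤
      10 * ∑ k ∈ Finset.range n, a k := by
  have hle {K : ℕ} (hK : K ∈ {k ∈ descent (greedyScale u y) n | ¬ k < 3 * 2 ^ greedyScale u y k}) :
      3 * 2 ^ greedyScale u y K ≤ K ∧ K ≤ n :=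
    ⟨not_lt.1 (Finset.mem_filter.1 hK).2, (mem_Icc_of_mem_descent (Finset.mem_filter.1 hK).1).2⟩
  calc _ ≤ 2 * ∑ k ∈ Finset.range n, 5 * a k := by
        refine card_le_two_mul_sum (fun K ↦ hle) (fun K hK K' hK' ↦ ?_)
          (fun k hk ↦ by linarith [ha0 k hk]) fun K hK k hk ↦ ?_
        · exact add_two_pow_le_of_mem_descent (fun k hk ↦ (greedyScale_spec hsurj y hk).1)
            (Finset.mem_filter.1 hK).1 (Finset.mem_filter.1 hK').1
        · have hpos : 0 < 2 ^ greedyScale u y K := by positivity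
          have hkn : k < n := by
            have := hle hK
            have := (Finset.mem_Ico.1 hk).2
            omega
          have := ha k hkn _ (factorAt_notMem_Lang_of_mem_window (hle hK).1 hk)
          rw [Nat.cast_mul, Nat.cast_pow, ← div_div, div_le_iff₀ (by positivity)] at this
          rw [one_div_pow, div_le_iff₀ (by positivity)]
          push_cast at this
          linarith
    _ = 10 * ∑ k ∈ Finset.range n, a k := by
        rw [← Finset.mul_sum]
        ring

lemma card_descent_le (hsurj : Function.Surjective u) (hN : factorAt y n N ∉ Lang u)
    (ha : ∀ k < n, ∀ m, factorAt y k m ∉ Lang u → 1 / (m : ℝ) ≤ a k) :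
    (#(descent (greedyScale u y) n) : ℝ) ≤ 13 * ∑ k ∈ Finset.range n, a k + (3 * N + 3) := by
  have hlow : ∀ k < n, 1 / ((n + N - k : ℕ) : ℝ) ≤ a k := fun k hk ↦
    ha k hk _ fun hmem ↦ hN (factorAt_mem_Lang_of_le hmem hk.le (by omega))
  have hsteep := card_steep_le (fun k hk ↦ (greedyScale_spec hsurj y hk).1) n
  have hflat := card_not_steep_le hsurj (fun k hk ↦ (hlow k hk).trans' (by positivity)) ha
  have hlog : Real.log (2 * n + 1) ≤ 1 + N + ∑ k ∈ Finset.range n, a k := calc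
    Real.log (2 * n + 1) ≤ Real.log (2 * (n + N + 1)) :=
        Real.log_le_log (by positivity) (by linarith [Nat.cast_nonneg (α := ℝ) N])
    _ = Real.log 2 + Real.log (n + N + 1) := Real.log_mul (by norm_num) (by positivity)
    _ ≤ 1 + N + ∑ k ∈ Finset.range n, a k := by
        linarith [log_sub_log_le_sum hlow, Real.log_le_sub_one_of_pos (x := 2) (by norm_num),
          Real.log_le_sub_one_of_pos (x := (N : ℝ) + 1) (by positivity)]
  rw [← Finset.card_filter_add_card_filter_not fun k ↦ k < 3 * 2 ^ greedyScale u y k]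
  push_cast
  linarith

end StepCount

section Potential

variable {u x : ℕ → A} {m : ℕ}

lemma prefixWord_mem_Lang_of_mem_orbitClosure [TopologicalSpace A] [DiscreteTopology A]
    (hx : x ∈ orbitClosure u) (m : ℕ) : prefixWord x m ∈ Lang u := by
  have hopen : IsOpen ((Finset.range m : Set ℕ).pi fun i ↦ ({x i} : Set A)) :=
    isOpen_set_pi (Finset.range m).finite_toSet fun _ _ ↦ isOpen_discrete _
  obtain ⟨_, hxi, i, rfl⟩ := mem_closure_iff.1 hx _ hopen fun _ _ ↦ rfl
  rw [prefixWord_eq_factorAt, factorAt_mem_Lang_iff]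
  refine ⟨i, factorAt_eq_factorAt_iff.2 fun r hr ↦ ?_⟩
  simpa [shift_iterate_apply] using (hxi r (by simpa using hr)).symm

lemma lt_of_prefixWord_notMem_Lang (hm : prefixWord x m ∉ Lang u) {n : ℕ}
    (hn : prefixWord x n ∈ Lang u) : n < m := by
  by_contra! hmn
  rw [prefixWord_eq_factorAt] at hm hn
  exact hm (factorAt_mem_Lang_of_le hn le_rfl (by omega))

lemma delta_lt (hm : prefixWord x m ∉ Lang u) : delta u x < m := by
  have hne : {n | prefixWord x n ∈ Lang u}.Nonempty := ⟨0, 0, rfl⟩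
  exact lt_of_prefixWord_notMem_Lang hm
    (Nat.sSup_mem hne ⟨m, fun _ hn ↦ (lt_of_prefixWord_notMem_Lang hm hn).le⟩)

lemma delta_pos (hsurj : Function.Surjective u) (hm : prefixWord x m ∉ Lang u) :
    0 < delta u x :=
  le_csSup ⟨m, fun _ hn ↦ (lt_of_prefixWord_notMem_Lang hm hn).le⟩
    (show prefixWord x 1 ∈ Lang u from factorAt_one_mem_Lang hsurj x 0)

lemma one_div_add_one_le_log {d : ℝ} (hd : 0 < d) : 1 / (d + 1) ≤ Real.log (1 + 1 / d) := by
  convert Real.one_sub_inv_le_log_of_pos (x := 1 + 1 / d) (by positivity) using 1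
  field_simp
  ring

lemma one_div_le_log_delta (hsurj : Function.Surjective u) (hm : prefixWord x m ∉ Lang u) :
    1 / (m : ℝ) ≤ Real.log (1 + 1 / delta u x) := by
  have hpos : (0 : ℝ) < delta u x := Nat.cast_pos.2 (delta_pos hsurj hm)
  have hlt : (delta u x : ℝ) + 1 ≤ m := by exact_mod_cast delta_lt hm
  exact (one_div_le_one_div_of_le (by positivity) hlt).trans (one_div_add_one_le_log hpos)

end Potential

section Summation

open scoped Finset

lemma sum_pow_le_of_card_fiber_le {ι : Type*} (s : Finset ι) (l : ι → ℕ) {M B : ℕ}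
    (hcard : ∀ k, #{i ∈ s | l i = k} ≤ M ^ k * B) {r : ℝ} (hr : 0 ≤ r) (hMr : M * r < 1) :
    ∑ i ∈ s, r ^ l i ≤ B * (1 - M * r)⁻¹ := by
  have hMr0 : 0 ≤ M * r := by positivity
  have hgeom := sum_le_hasSum (s.image l) (fun k _ ↦ pow_nonneg hMr0 k)
    (hasSum_geometric_of_lt_one hMr0 hMr)
  calc ∑ i ∈ s, r ^ l i = ∑ k ∈ s.image l, #{i ∈ s | l i = k} • r ^ k :=
        Finset.sum_comp (fun k ↦ r ^ k) l
    _ ≤ ∑ k ∈ s.image l, B * (M * r) ^ k := Finset.sum_le_sum fun k _ ↦ by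
        have hk : (#{i ∈ s | l i = k} : ℝ) ≤ M ^ k * B := by exact_mod_cast hcard k
        calc #{i ∈ s | l i = k} • r ^ k ≤ (M ^ k * B) * r ^ k := by
              rw [nsmul_eq_mul]
              gcongr
          _ = B * (M * r) ^ k := by ring
    _ ≤ B * (1 - M * r)⁻¹ := by
        rw [← Finset.mul_sum]
        gcongr

lemma exists_forall_summable_exp_tsum_lt_one (M B : ℕ) {c d η : ℝ} (hc : 0 ≤ c) (hd : 0 ≤ d)
    (hη : 0 < η) : ∃ β₀ : ℝ, 0 < β₀ ∧ ∀ β, β₀ < β → ∀ {ι : Type*} (S : ι → ℝ) (l : ι → ℕ),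
      (∀ k, {i | l i = k}.encard ≤ (M ^ k * B : ℕ)) → (∀ i, l i ≤ c * S i + d) →
      (∀ i, η ≤ S i) →
      Summable (fun i ↦ Real.exp (-β * S i)) ∧ ∑' i, Real.exp (-β * S i) < 1 := by
  set t := Real.log (2 * M + 1) with ht
  have ht0 : 0 ≤ t := Real.log_nonneg (by linarith [Nat.cast_nonneg (α := ℝ) M])
  have hMt : M * Real.exp (-t) ≤ 1 / 2 := by
    rw [Real.exp_neg, ht, Real.exp_log (by positivity), ← div_eq_mul_inv,
      div_le_div_iff₀ (by positivity) two_pos]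
    linarith
  refine ⟨c * t + (d * t + 2 * B) / η + 1, by positivity, fun β hβ ι S l hcard hl hS ↦ ?_⟩
  have hβη : d * t + 2 * B < (β - c * t) * η := by
    rw [← div_lt_iff₀ hη]
    linarith
  have hβt : 0 < β - c * t := by
    have : 0 ≤ (d * t + 2 * B) / η := by positivity
    linarith
  have hterm (i : ι) : Real.exp (-β * S i) ≤ Real.exp (-(2 * B)) * Real.exp (-t) ^ l i := by
    rw [← Real.exp_nat_mul, ← Real.exp_add, Real.exp_le_exp]
    linarith [mul_le_mul_of_nonneg_left (hS i) hβt.le, mul_le_mul_of_nonneg_left (hl i) ht0]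
  have hsum (s : Finset ι) : ∑ i ∈ s, Real.exp (-β * S i) ≤ Real.exp (-(2 * B)) * (2 * B) := by
    have hfiber (k : ℕ) : #{i ∈ s | l i = k} ≤ M ^ k * B := by
      rw [← Nat.cast_le (α := ℕ∞), ← Set.encard_coe_eq_coe_finsetCard]
      refine (Set.encard_le_encard fun i hi ↦ ?_).trans (hcard k)
      exact (Finset.mem_filter.1 hi).2
    have hinv : (1 - M * Real.exp (-t))⁻¹ ≤ 2 := inv_le_of_inv_le₀ two_pos (by linarith)
    calc ∑ i ∈ s, Real.exp (-β * S i)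
        ≤ Real.exp (-(2 * B)) * ∑ i ∈ s, Real.exp (-t) ^ l i := by
          rw [Finset.mul_sum]
          exact Finset.sum_le_sum fun i _ ↦ hterm i
      _ ≤ Real.exp (-(2 * B)) * (B * (1 - M * Real.exp (-t))⁻¹) := by
          gcongr
          exact sum_pow_le_of_card_fiber_le s l hfiber (Real.exp_pos _).le (by linarith)
      _ ≤ Real.exp (-(2 * B)) * (2 * B) := by
          rw [mul_comm (2 : ℝ)]
          gcongr
  refine ⟨summable_of_sum_le (fun _ ↦ (Real.exp_pos _).le) hsum,
    (Real.tsum_le_of_sum_le (fun _ ↦ (Real.exp_pos _).le) hsum).trans_lt ?_⟩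
  rw [Real.exp_neg, inv_mul_lt_one₀ (Real.exp_pos _)]
  linarith [Real.add_one_le_exp (2 * B : ℝ)]

end Summation

section TransferOperator

variable [TopologicalSpace A] [DiscreteTopology A] {u y : ℕ → A} {φ : (ℕ → A) → ℝ} {n N : ℕ}

lemma one_div_le_of_factorAt_notMem_Lang (hsurj : Function.Surjective u)
    (hφ : ∀ x ∉ orbitClosure u, Real.log (1 + 1 / (delta u x : ℝ)) ≤ φ x) {k m : ℕ}
    (hm : factorAt y k m ∉ Lang u) : 1 / (m : ℝ) ≤ φ (shift^[k] y) := by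
  rw [← prefixWord_shift_iterate] at hm
  exact (one_div_le_log_delta hsurj hm).trans
    (hφ _ fun hmem ↦ hm (prefixWord_mem_Lang_of_mem_orbitClosure hmem m))

lemma one_div_le_birkhoffSum (hsurj : Function.Surjective u)
    (hφ : ∀ x ∉ orbitClosure u, Real.log (1 + 1 / (delta u x : ℝ)) ≤ φ x) (hn : 0 < n)
    {m : ℕ} (hm : factorAt y 0 m ∉ Lang u) (hN : factorAt y n N ∉ Lang u) :
    1 / (m : ℝ) ≤ birkhoffSum shift φ n y := by
  have hnonneg : ∀ k ∈ Finset.range n, 0 ≤ φ (shift^[k] y) := fun k hk ↦ by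
    rw [Finset.mem_range] at hk
    refine (one_div_le_of_factorAt_notMem_Lang (m := n + N - k) hsurj hφ fun hmem ↦ ?_).trans'
      (by positivity)
    exact hN (factorAt_mem_Lang_of_le hmem hk.le (by omega))
  exact (one_div_le_of_factorAt_notMem_Lang hsurj hφ hm).trans
    (Finset.single_le_sum hnonneg (Finset.mem_range.2 hn))

theorem induced_transfer_operator_lt_one_general {R : ℕ} (hrec : LinearlyRecurrentWith R u)
    (hper : ¬ PeriodicSeq u) (hsurj : Function.Surjective u)
    (hφ : ∀ x ∉ orbitClosure u, Real.log (1 + 1 / (delta u x : ℝ)) ≤ φ x)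
    {J : Set (ℕ → A)} (hJ : ∀ y ∈ J, prefixWord y N ∉ Lang u) :
    ∃ β₀ : ℝ, 0 < β₀ ∧ ∀ β : ℝ, β₀ < β → ∀ x ∈ J, ∀ P : ℕ × (ℕ → A) → Prop,
      (∀ q, P q → 1 ≤ q.1 ∧ q.2 ∈ J ∧ shift^[q.1] q.2 = x) →
      Summable (fun q : {q // P q} ↦ Real.exp (-β * birkhoffSum shift φ q.1.1 q.1.2)) ∧
        ∑' q : {q // P q}, Real.exp (-β * birkhoffSum shift φ q.1.1 q.1.2) < 1 := by
  obtain ⟨β₀, hβ₀, hlt⟩ := exists_forall_summable_exp_tsum_lt_one (4 * (4 * R ^ 2)) (2 ^ N)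
    (c := 13) (d := 3 * N + 3) (η := 1 / (N + 1 : ℕ)) (by norm_num) (by positivity) (by positivity)
  refine ⟨β₀, hβ₀, fun β hβ x hx P hP ↦ ?_⟩
  have hfst (q : {q // P q}) : factorAt q.1.2 0 (N + 1) ∉ Lang u := fun hmem ↦
    hJ _ (hP q.1 q.2).2.1
      (prefixWord_eq_factorAt q.1.2 N ▸ factorAt_mem_Lang_of_le hmem le_rfl (by omega))
  have hlast (q : {q // P q}) : factorAt q.1.2 q.1.1 N ∉ Lang u := by
    rw [← prefixWord_shift_iterate, (hP q.1 q.2).2.2]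
    exact hJ x hx
  refine hlt β hβ (ι := {q // P q}) (fun q ↦ birkhoffSum shift φ q.1.1 q.1.2)
    (fun q ↦ (descent (greedyScale u q.1.2) q.1.1).card) (fun k ↦ ?_) (fun q ↦ ?_) fun q ↦ ?_
  · refine (Set.encard_le_encard_of_injOn (t := dyadicPreimages u k N x) (f := Subtype.val)
      ?_ Subtype.val_injective.injOn).trans
      (encard_dyadicPreimages_le (fun b hb ↦ encard_leftExtensions_le hrec hper hb) k N x)
    rintro q rfl
    rw [← (hP q.1 q.2).2.2]
    exact mem_dyadicPreimages hsurj q.1.2 ((greedyScale_le hsurj (hlast q)).trans_lt (by omega))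
  · exact card_descent_le hsurj (hlast q)
      fun k _ m hm ↦ one_div_le_of_factorAt_notMem_Lang hsurj hφ hm
  · exact one_div_le_birkhoffSum hsurj hφ (hP q.1 q.2).1 (hfst q) (hlast q)

end TransferOperator

/-- (Proposition `prop:therm:cruc`.) For the potential
`φ(x) = log(1 + 1/δ(x))` off `K` (and `0` on `K`) and a cylinder `J = [w_J]` with
`w_J ∉ L_H`, the induced transfer operator at `Z = 0` applied to `1_J` is `< 1`
for all large `β`: the series
`∑_{n≥1} ∑_{y ∈ J, τ(y)=n, σⁿy=x} exp(-β ∑_{k<n} φ(σᵏy))` converges and is `< 1`. -/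
theorem induced_transfer_operator_lt_one
    {A : Type*} [Fintype A] [DecidableEq A] [TopologicalSpace A] [DiscreteTopology A]
    (hD : 2 ≤ Fintype.card A)
    (H : A → List A) (hne : ∀ a, H a ≠ [])
    (hprim : PrimitiveSubst H) (haper : AperiodicSubst H)
    (hmarked : MarkedSubst H hne)
    (u : ℕ → A) (hu : IsFixedPointSubst H u)
    (φ : (ℕ → A) → ℝ)
    (hφK : ∀ x ∈ orbitClosure u, φ x = 0)
    (hφ : ∀ x ∉ orbitClosure u, φ x = Real.log (1 + 1 / (delta u x : ℝ)))
    (wJ : List A) (hwJ : wJ ∉ Lang u)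
    (J : Set (ℕ → A)) (hJ : J = {y : ℕ → A | prefixWord y wJ.length = wJ}) :
    ∃ β₀ : ℝ, 0 < β₀ ∧ ∀ β : ℝ, β₀ < β → ∀ x ∈ J,
      (Summable fun q : {q : ℕ × (ℕ → A) //
          1 ≤ q.1 ∧ q.2 ∈ J ∧ returnTime J q.2 = q.1 ∧ shift^[q.1] q.2 = x} =>
        Real.exp (-β * ∑ k ∈ Finset.range q.1.1, φ (shift^[k] q.1.2))) ∧
      (∑' q : {q : ℕ × (ℕ → A) //
          1 ≤ q.1 ∧ q.2 ∈ J ∧ returnTime J q.2 = q.1 ∧ shift^[q.1] q.2 = x},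
        Real.exp (-β * ∑ k ∈ Finset.range q.1.1, φ (shift^[k] q.1.2))) < 1 := by
  obtain ⟨R, hrec⟩ := hprim.exists_linearlyRecurrentWith hu
  have hJ_lang : ∀ y ∈ J, prefixWord y wJ.length ∉ Lang u := by
    subst hJ
    exact fun y hy hmem ↦ hwJ (hy ▸ hmem)
  obtain ⟨β₀, hβ₀, hlt⟩ := induced_transfer_operator_lt_one_general hrec (haper u hu)
    (hprim.surjective hu) (fun x hx ↦ (hφ x hx).ge) hJ_lang
  exact ⟨β₀, hβ₀, fun β hβ x hx ↦ hlt β hβ x hx _ fun _ hq ↦ ⟨hq.1, hq.2.1, hq.2.2.2⟩⟩
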